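/- arXiv:2501.17389 — 4 statements merged into one kernel-verified Lean document; each statement's English description precedes it below -/
import Mathlib

section
/- Let r be a relation on Fin n (n ≥ 1) that is strongly connected, meaning that for any two vertices i, j there is a directed walk of positive length from i to j. Suppose some vertex w has at least two out-neighbors, i.e., the set {u : r w u} has cardinality at least 2. Then for every vertex v, the number of directed walks of length n starting at v (with arbitrary endpoint) is at least 2. -/
/-- In a strongly connected directed graph on `n ≥ 1` vertices in which some
vertex has at least two out-neighbors, every vertex is the starting point of at
least two directed walks of length `n`. -/
theorem two_walks_of_length_n {n : ℕ} (hn : 1 ≤ n) (r : Fin n → Fin n → Prop)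
    (hconn : ∀ i j : Fin n, ∃ m : ℕ, 1 ≤ m ∧ ∃ v : Fin (m + 1) → Fin n,
      v 0 = i ∧ v (Fin.last m) = j ∧ ∀ k : Fin m, r (v k.castSucc) (v k.succ))
    (w : Fin n) (hw : 2 ≤ Nat.card {u : Fin n // r w u}) :
    ∀ i : Fin n,
      2 ≤ Nat.card {v : Fin (n + 1) → Fin n //
        v 0 = i ∧ ∀ k : Fin n, r (v k.castSucc) (v k.succ)} := by
  classical
  intro i
  have hf : ∀ j, ∃ u, r j u := by
    intro j
    obtain ⟨m, hm, v, h0, -, hv⟩ := hconn j j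
    refine ⟨v (Fin.succ ⟨0, hm⟩), ?_⟩
    have := hv ⟨0, hm⟩
    rw [← h0]
    exact this
  choose f hf using hf
  have key : ∀ k, k < n → ∀ u, r (f^[k] i) u → u ≠ f (f^[k] i) →
      2 ≤ Nat.card {v : Fin (n + 1) → Fin n //
        v 0 = i ∧ ∀ k : Fin n, r (v k.castSucc) (v k.succ)} := by
    intro k hk u hu hne
    apply Nat.succ_le_of_lt
    rw [Finite.one_lt_card_iff_nontrivial]
    refine ⟨⟨⟨fun t => f^[t.val] i, by simp, ?_⟩,
      ⟨fun t => if t.val ≤ k then f^[t.val] i else f^[t.val - k - 1] u, by simp, ?_⟩, ?_⟩⟩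
    · intro t
      simp only [Fin.val_castSucc, Fin.val_succ, Function.iterate_succ_apply']
      exact hf _
    · intro t
      simp only [Fin.val_castSucc, Fin.val_succ]
      rcases lt_trichotomy t.val k with h | h | h
      · rw [if_pos (by omega), if_pos (by omega), Function.iterate_succ_apply']
        exact hf _
      · rw [if_pos (by omega), if_neg (by omega), h]
        simpa using hu
      · rw [if_neg (by omega), if_neg (by omega),
          show t.val + 1 - k - 1 = (t.val - k - 1) + 1 by omega, Function.iterate_succ_apply']
        exact hf _
    · intro h
      have h2 := congrFun (congrArg Subtype.val h) ⟨k + 1, by omega⟩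
      simp [Function.iterate_succ_apply', -Function.iterate_succ] at h2
      exact hne h2.symm
  by_contra hcon
  have uniq : ∀ k, k < n → ∀ u, r (f^[k] i) u → u = f (f^[k] i) := by
    intro k hk u hu
    by_contra h
    exact hcon (key k hk u hu h)
  have hper : ∃ c, c < n ∧ f^[n] i = f^[c] i := by
    obtain ⟨a, b, hab, he⟩ := Fintype.exists_ne_map_eq_of_card_lt
      (fun t : Fin (n + 1) => f^[t.val] i) (by simp)
    have aux : ∀ a b : ℕ, a < b → b ≤ n → f^[a] i = f^[b] i →
        ∃ c, c < n ∧ f^[n] i = f^[c] i := by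
      intro a b h hb he
      refine ⟨n - b + a, by omega, ?_⟩
      rw [Function.iterate_add_apply, he, ← Function.iterate_add_apply]
      congr 2
      omega
    have hab' : a.val ≠ b.val := fun h => hab (Fin.ext h)
    rcases lt_or_gt_of_ne hab' with h | h
    · exact aux a b h (by omega) he
    · exact aux b a h (by omega) he.symm
  have closed : ∀ j u, (∃ k, k < n ∧ f^[k] i = j) → r j u → ∃ k, k < n ∧ f^[k] i = u := by
    rintro j u ⟨k, hk, rfl⟩ hu
    have := uniq k hk u hu
    by_cases h : k + 1 < n
    · exact ⟨k + 1, h, by rw [Function.iterate_succ_apply', this]⟩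
    · obtain ⟨c, hc, he⟩ := hper
      refine ⟨c, hc, ?_⟩
      rw [← he, this, ← Function.iterate_succ_apply' f]
      congr 2
      omega
  obtain ⟨m, -, v, h0, hl, hv⟩ := hconn i w
  have hall : ∀ t : Fin (m + 1), ∃ k, k < n ∧ f^[k] i = v t := by
    intro t
    induction t using Fin.induction with
    | zero => exact ⟨0, hn, by simp [h0]⟩
    | succ t ih => exact closed _ _ ih (hv t)
  obtain ⟨k, hk, hkw⟩ := hall (Fin.last m)
  rw [hl] at hkw
  have hnt := Finite.one_lt_card_iff_nontrivial.mp (Nat.lt_of_succ_le hw)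
  obtain ⟨⟨a, ha⟩, ⟨b, hb⟩, hab⟩ := hnt
  subst hkw
  exact hab (Subtype.ext ((uniq k hk a ha).trans (uniq k hk b hb).symm))
end

section
/- Let B be an n × n matrix with nonnegative integer entries that is irreducible, and suppose some row of B has sum at least 2, i.e., there exists i₀ with ∑_j B_{i₀ j} ≥ 2. Then every row of B^n has sum at least 2: for every index i, ∑_j (B^n)_{ij} ≥ 2. -/
/-- A square matrix with nonnegative entries is irreducible if for all indices
`i, j` some power `M ^ m` (`m ≥ 1`) has a strictly positive `(i,j)` entry. -/
def MatIrreducible {n : ℕ} (M : Matrix (Fin n) (Fin n) ℕ) : Prop :=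
  ∀ i j : Fin n, ∃ m : ℕ, 1 ≤ m ∧ 0 < (M ^ m) i j

theorem rs_succ {n : ℕ} (B : Matrix (Fin n) (Fin n) ℕ) (k : ℕ) (i : Fin n) :
    ∑ j, (B ^ (k+1)) i j = ∑ l, B i l * ∑ j, (B ^ k) l j := by
  simp only [pow_succ', Matrix.mul_apply, Finset.mul_sum]
  exact Finset.sum_comm

theorem rs_succ' {n : ℕ} (B : Matrix (Fin n) (Fin n) ℕ) (k : ℕ) (i : Fin n) :
    ∑ j, (B ^ (k+1)) i j = ∑ l, (B ^ k) i l * ∑ j, B l j := by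
  simp only [pow_succ, Matrix.mul_apply, Finset.mul_sum]
  exact Finset.sum_comm

theorem pow_pos_step {n : ℕ} (B : Matrix (Fin n) (Fin n) ℕ) (m : ℕ) (i j : Fin n)
    (h : 0 < (B ^ (m+1)) i j) : ∃ l, 0 < B i l ∧ 0 < (B ^ m) l j := by
  rw [pow_succ', Matrix.mul_apply] at h
  obtain ⟨l, -, hl⟩ := Finset.exists_ne_zero_of_sum_ne_zero h.ne'
  exact ⟨l, Nat.pos_of_ne_zero (left_ne_zero_of_mul hl),
    Nat.pos_of_ne_zero (right_ne_zero_of_mul hl)⟩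

theorem closed_pow {n : ℕ} (B : Matrix (Fin n) (Fin n) ℕ) (T : Finset (Fin n))
    (hT : ∀ i j, 0 < B i j → j ∈ T → i ∈ T) (m : ℕ) :
    ∀ i j, 0 < (B ^ m) i j → j ∈ T → i ∈ T := by
  induction m with
  | zero =>
    intro i j h hj
    by_cases e : i = j
    · exact e ▸ hj
    · simp [Matrix.one_apply, e] at h
  | succ m ih =>
    intro i j h hj
    obtain ⟨l, h1, h2⟩ := pow_pos_step B m i j h
    exact hT i l h1 (ih l j h2 hj)

/-- If an irreducible nonnegative integral `n × n` matrix `B` has some row sum at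
least `2`, then every row sum of `B ^ n` is at least `2`. -/
theorem rowSums_pow_ge_two {n : ℕ} (B : Matrix (Fin n) (Fin n) ℕ)
    (hirr : MatIrreducible B) (hrow : ∃ i₀ : Fin n, 2 ≤ ∑ j, B i₀ j) :
    ∀ i : Fin n, 2 ≤ ∑ j, (B ^ n) i j := by
  obtain ⟨i₀, h0⟩ := hrow
  have hone : ∀ i, 1 ≤ ∑ j, B i j := by
    intro i
    obtain ⟨m, hm, hp⟩ := hirr i i
    obtain ⟨m, rfl⟩ := Nat.exists_eq_add_of_le' hm
    obtain ⟨l, hl, -⟩ := pow_pos_step B m i i hp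
    exact le_trans hl (Finset.single_le_sum (f := fun j => B i j) (by simp) (Finset.mem_univ l))
  let S : ℕ → Finset (Fin n) := fun k => Finset.univ.filter fun i => 2 ≤ ∑ j, (B ^ k) i j
  have hS : ∀ k i, i ∈ S k ↔ 2 ≤ ∑ j, (B ^ k) i j := by simp [S]
  have hmono : ∀ k, S k ⊆ S (k+1) := by
    intro k i hi
    rw [hS] at hi ⊢
    rw [rs_succ']
    exact hi.trans (Finset.sum_le_sum fun l _ => Nat.le_mul_of_pos_right _ (hone l))
  have hpred : ∀ k i j, 0 < B i j → j ∈ S k → i ∈ S (k+1) := by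
    intro k i j hb hj
    rw [hS] at hj ⊢
    rw [rs_succ]
    refine hj.trans ((Nat.le_mul_of_pos_left _ hb).trans ?_)
    exact Finset.single_le_sum (f := fun l => B i l * ∑ j, (B ^ k) l j) (by simp)
      (Finset.mem_univ j)
  have hi0 : ∀ k, i₀ ∈ S (k+1) := by
    intro k
    induction k with
    | zero => rw [hS]; simpa using h0
    | succ k ih => exact hmono _ ih
  have hcard : ∀ k, k + 1 ≤ n → k + 1 ≤ (S (k+1)).card := by
    intro k
    induction k with
    | zero => intro _; exact Finset.card_pos.2 ⟨i₀, hi0 0⟩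
    | succ k ih =>
      intro hk
      have h1 := ih (by omega)
      by_cases e : S (k+1) = S (k+1+1)
      · have hu : S (k+1) = Finset.univ := by
          ext i
          simp only [Finset.mem_univ, iff_true]
          obtain ⟨m, -, hp⟩ := hirr i i₀
          refine closed_pow B (S (k+1)) ?_ m i i₀ hp (hi0 k)
          intro a b hab hb
          rw [e]
          exact hpred _ a b hab hb
        rw [← e, hu]
        simpa using hk
      · have := Finset.card_lt_card (lt_of_le_of_ne (hmono (k+1)) e)
        omega
  intro i
  rw [← hS]
  obtain ⟨k, rfl⟩ : ∃ k, n = k + 1 := ⟨n - 1, by have := i.2; omega⟩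
  have hu : S (k+1) = Finset.univ := by
    apply Finset.eq_univ_of_card
    have := hcard k le_rfl
    have h2 := Finset.card_le_univ (S (k+1))
    simp only [Fintype.card_fin] at h2 ⊢
    omega
  rw [hu]; simp
end

section
/- Let L : (ℕ → ℝ) → (ℕ → ℝ) be the linear map defined by (L x) 0 = x 1, (L x) 1 = 2 * x 1, and (L x) i = x (i − 2) for all i ≥ 2. Then 2 is an eigenvalue of L: the nonzero sequence x defined by x (2k) = 2^(−k) and x (2k+1) = 2^(1−k) for all k ≥ 0 satisfies L x = 2 • x. -/
/-- `2` is an eigenvalue of the linear operator `L` on real sequences given by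
`(L x) 0 = x 1`, `(L x) 1 = 2 * x 1`, `(L x) i = x (i - 2)` for `i ≥ 2`: the
nonzero sequence with `x (2k) = 2⁻ᵏ` and `x (2k+1) = 2^(1-k)` satisfies
`L x = 2 • x`. -/
theorem two_is_eigenvalue (L : (ℕ → ℝ) →ₗ[ℝ] (ℕ → ℝ))
    (hL0 : ∀ x : ℕ → ℝ, L x 0 = x 1)
    (hL1 : ∀ x : ℕ → ℝ, L x 1 = 2 * x 1)
    (hL2 : ∀ (x : ℕ → ℝ) (i : ℕ), 2 ≤ i → L x i = x (i - 2))
    (x : ℕ → ℝ)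
    (hxeven : ∀ k : ℕ, x (2 * k) = (2 : ℝ) ^ (-(k : ℤ)))
    (hxodd : ∀ k : ℕ, x (2 * k + 1) = (2 : ℝ) ^ ((1 : ℤ) - (k : ℤ))) :
    x ≠ 0 ∧ L x = (2 : ℝ) • x := by
  have h0 : x 0 = 1 := by simpa using hxeven 0
  have h1 : x 1 = 2 := by simpa using hxodd 0
  have hstep : ∀ i : ℕ, x i = 2 * x (i + 2) := by
    intro i
    rcases Nat.even_or_odd' i with ⟨k, rfl | rfl⟩
    · have h := hxeven (k + 1)
      rw [show 2 * (k + 1) = 2 * k + 2 by ring] at h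
      rw [h, hxeven k, ← zpow_one_add₀ (two_ne_zero)]
      congr 1
      push_cast
      ring
    · have h := hxodd (k + 1)
      rw [show 2 * (k + 1) + 1 = 2 * k + 1 + 2 by ring] at h
      rw [h, hxodd k, ← zpow_one_add₀ (two_ne_zero)]
      congr 1
      push_cast
      ring
  refine ⟨fun h => ?_, ?_⟩
  · rw [h] at h0
    simp at h0
  · funext i
    rw [Pi.smul_apply, smul_eq_mul]
    match i with
    | 0 => rw [hL0, h0, h1]; norm_num
    | 1 => exact hL1 x
    | j + 2 =>
      rw [hL2 x (j + 2) (by omega), Nat.add_sub_cancel]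
      exact hstep j
end

section
/- Let L : (ℕ → ℝ) → (ℕ → ℝ) be the linear map defined by (L x) 0 = x 1, (L x) 1 = 2 * x 1, and (L x) i = x (i − 2) for all i ≥ 2. If λ is a nonzero real number, x : ℕ → ℝ satisfies L x = λ • x, and λ ≠ 2, then x = 0. In other words, the only nonzero eigenvalue of L is 2. -/
/-- The linear operator `L` on real sequences given by `(L x) 0 = x 1`,
`(L x) 1 = 2 * x 1`, `(L x) i = x (i - 2)` for `i ≥ 2` has no nonzero eigenvalue
other than `2`: if `L x = λ • x` with `λ ≠ 0` and `λ ≠ 2`, then `x = 0`. -/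
theorem only_nonzero_eigenvalue_is_two (L : (ℕ → ℝ) →ₗ[ℝ] (ℕ → ℝ))
    (hL0 : ∀ x : ℕ → ℝ, L x 0 = x 1)
    (hL1 : ∀ x : ℕ → ℝ, L x 1 = 2 * x 1)
    (hL2 : ∀ (x : ℕ → ℝ) (i : ℕ), 2 ≤ i → L x i = x (i - 2))
    (lam : ℝ) (hlam0 : lam ≠ 0) (hlam2 : lam ≠ 2)
    (x : ℕ → ℝ) (hx : L x = lam • x) :
    x = 0 := by
  have h : ∀ i, L x i = lam * x i := fun i => by rw [hx]; simp
  have h1 : x 1 = 0 := by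
    have e := h 1
    rw [hL1] at e
    have e2 : (lam - 2) * x 1 = 0 := by linarith
    exact (mul_eq_zero.mp e2).resolve_left (sub_ne_zero.mpr hlam2)
  have h0 : x 0 = 0 := by
    have e := h 0
    rw [hL0, h1] at e
    exact (mul_eq_zero.mp e.symm).resolve_left hlam0
  funext i
  induction i using Nat.strong_induction_on with
  | _ i ih =>
    rcases Nat.lt_or_ge i 2 with hi | hi
    · interval_cases i
      · exact h0
      · exact h1
    · have e := h i
      have e2 : x (i - 2) = 0 := ih (i - 2) (by omega)
      rw [hL2 x i hi, e2] at e
      exact (mul_eq_zero.mp e.symm).resolve_left hlam0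
end
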